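/- arXiv:1911.02780 — 2 statements merged into one kernel-verified Lean document; each statement's English description precedes it below -/
import Mathlib

section
/- Let a_1, …, a_T be real numbers and let l be an integer with 1 ≤ l ≤ T. Then the maximum of the density of [s,e] over all windows 1 ≤ s ≤ e ≤ T with e − s + 1 ≥ l equals the maximum of the density of [s,e] over all windows 1 ≤ s ≤ e ≤ T with l ≤ e − s + 1 ≤ 2l. In particular, the maximum density over windows of length at least l is always attained by a window of length at most 2l. -/
/-!
If a window is cut into two consecutive pieces, its density is a weighted average of the densities
of the pieces, so one piece is at least as dense as the whole (`density_le_or_le`). A window longer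
than `2 * l` can be cut into a first piece of length `l` and a remainder of length more than `l`:
either the first piece is at least as dense, or the remainder is, and it is shorter. By induction
every window of length at least `l` is dominated by one of length between `l` and `2 * l`
(`exists_short_window`). As there are only finitely many windows of the latter kind, their largest
density exists and is also the largest density over all windows of length at least `l`.
-/

/-- The density of the window [s,e] of the sequence `a`. -/
noncomputable def density (a : ℕ → ℝ) (s e : ℕ) : ℝ :=
  (∑ i ∈ Finset.Icc s e, a i) / ((e : ℝ) - s + 1)

theorem density_le_or_le (a : ℕ → ℝ) {s m e : ℕ} (hsm : s ≤ m) (hme : m < e) :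
    density a s e ≤ density a s m ∨ density a s e ≤ density a (m + 1) e := by
  have hsum : ∑ i ∈ Finset.Icc s e, a i
      = ∑ i ∈ Finset.Icc s m, a i + ∑ i ∈ Finset.Icc (m + 1) e, a i := by
    have h := Finset.sum_Ico_consecutive a (show s ≤ m + 1 by omega) (show m + 1 ≤ e + 1 by omega)
    simpa only [Finset.Ico_add_one_right_eq_Icc] using h.symm
  have h1 : (s : ℝ) ≤ m := by exact_mod_cast hsm
  have h2 : (m : ℝ) + 1 ≤ e := by exact_mod_cast hme
  unfold density
  rw [hsum]
  push_cast
  generalize ∑ i ∈ Finset.Icc s m, a i = x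
  generalize ∑ i ∈ Finset.Icc (m + 1) e, a i = y
  by_contra! h
  obtain ⟨hx, hy⟩ := h
  rw [div_lt_iff₀ (by linarith)] at hx hy
  have hd : (x + y) / ((e : ℝ) - s + 1) * ((e : ℝ) - s + 1) = x + y :=
    div_mul_cancel₀ _ (by linarith)
  nlinarith

/-- Every window of length at least `l` contains a window of length between `l` and `2 * l` that is
at least as dense. -/
theorem exists_short_window (a : ℕ → ℝ) {l : ℕ} (hl : 1 ≤ l) (e : ℕ) :
    ∀ n s : ℕ, e - s = n → s ≤ e → l ≤ e - s + 1 →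
      ∃ s' e' : ℕ, s ≤ s' ∧ s' ≤ e' ∧ e' ≤ e ∧ l ≤ e' - s' + 1 ∧ e' - s' + 1 ≤ 2 * l ∧
        density a s e ≤ density a s' e' := by
  intro n
  induction n using Nat.strong_induction_on with
  | _ n ih =>
    intro s hn hse hle
    by_cases h : e - s + 1 ≤ 2 * l
    · exact ⟨s, e, le_rfl, hse, le_rfl, hle, h, le_rfl⟩
    rcases density_le_or_le a (show s ≤ s + l - 1 by omega) (show s + l - 1 < e by omega)
      with hd | hd
    · exact ⟨s, s + l - 1, by omega, by omega, by omega, by omega, by omega, hd⟩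
    · obtain ⟨s', e', h1, h2, h3, h4, h5, h6⟩ :=
        ih (e - (s + l - 1 + 1)) (by omega) (s + l - 1 + 1) rfl (by omega) (by omega)
      exact ⟨s', e', by omega, h2, h3, h4, h5, hd.trans h6⟩

/-- the maximum density over windows of length at least `l`
equals the maximum density over windows of length between `l` and `2l`;
in particular it is attained by a window of length at most `2l`. -/
theorem max_density_attained_short_window (T : ℕ) (a : ℕ → ℝ) (l : ℕ)
    (hl : 1 ≤ l) (hlT : l ≤ T) :
    (sSup {x : ℝ | ∃ s e : ℕ, 1 ≤ s ∧ s ≤ e ∧ e ≤ T ∧ l ≤ e - s + 1 ∧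
          x = density a s e}
        = sSup {x : ℝ | ∃ s e : ℕ, 1 ≤ s ∧ s ≤ e ∧ e ≤ T ∧ l ≤ e - s + 1 ∧
            e - s + 1 ≤ 2 * l ∧ x = density a s e})
    ∧ ∃ s e : ℕ, 1 ≤ s ∧ s ≤ e ∧ e ≤ T ∧ l ≤ e - s + 1 ∧ e - s + 1 ≤ 2 * l ∧
        density a s e
          = sSup {x : ℝ | ∃ s e : ℕ, 1 ≤ s ∧ s ≤ e ∧ e ≤ T ∧ l ≤ e - s + 1 ∧
              x = density a s e} := by
  set A := {x : ℝ | ∃ s e : ℕ, 1 ≤ s ∧ s ≤ e ∧ e ≤ T ∧ l ≤ e - s + 1 ∧ x = density a s e}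
  set B := {x : ℝ | ∃ s e : ℕ, 1 ≤ s ∧ s ≤ e ∧ e ≤ T ∧ l ≤ e - s + 1 ∧
    e - s + 1 ≤ 2 * l ∧ x = density a s e}
  have hfin : B.Finite := by
    refine ((Set.finite_Iic (T, T)).image fun p : ℕ × ℕ => density a p.1 p.2).subset ?_
    rintro x ⟨s, e, -, hse, heT, -, -, rfl⟩
    exact ⟨(s, e), ⟨hse.trans heT, heT⟩, rfl⟩
  have hne : B.Nonempty :=
    ⟨_, 1, l, le_rfl, hl, hlT, by omega, by omega, rfl⟩
  obtain ⟨M, hM⟩ : ∃ M, IsGreatest B M := hfin.isCompact.exists_isGreatest hne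
  have hMA : IsGreatest A M := by
    constructor
    · obtain ⟨s, e, h1, h2, h3, h4, -, h6⟩ := hM.1
      exact ⟨s, e, h1, h2, h3, h4, h6⟩
    · rintro x ⟨s, e, h1, h2, h3, h4, rfl⟩
      obtain ⟨s', e', k1, k2, k3, k4, k5, k6⟩ := exists_short_window a hl e _ s rfl h2 h4
      exact k6.trans (hM.2 ⟨s', e', h1.trans k1, k2, k3.trans h3, k4, k5, rfl⟩)
  rw [hMA.csSup_eq, hM.csSup_eq]
  obtain ⟨s, e, h1, h2, h3, h4, h5, h6⟩ := hM.1
  exact ⟨rfl, s, e, h1, h2, h3, h4, h5, h6.symm⟩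
end

section
/- (Uniqueness of the (l,δ)-maximal dense core.) Let G_1, …, G_T be a temporal graph on a finite vertex set V, let l ≥ 2 be an integer and δ > 0 a real. Then there exists exactly one set C ⊆ V such that C is (l,δ)-dense and every (l,δ)-dense subset S ⊆ V satisfies S ⊆ C. -/
/-!
Degrees into a set are monotone in that set, so a vertex that is dense in `S` is, through the same
window, dense in every superset of `S` (`denseNode.mono`). Hence the union of all dense sets is
itself dense, and it is the greatest dense set. A greatest element is unique by antisymmetry
of inclusion.
-/

variable {V : Type*}

-- `tdeg G S u t`: the number of vertices `v ∈ S` adjacent to `u` in the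
-- snapshot `G t`.
open Classical in
noncomputable def tdeg (G : ℕ → SimpleGraph V) (S : Finset V) (u : V) (t : ℕ) : ℕ :=
  (S.filter fun v => (G t).Adj u v).card

/-- `u` is an `(l,δ)`-dense node in `S`: there is a window `[s,e] ⊆ [1,T]` of
length at least `l` on which the total degree of `u` towards `S` is at least
`δ · (e − s + 1)`. -/
def denseNode (T : ℕ) (G : ℕ → SimpleGraph V) (l : ℕ) (δ : ℝ)
    (S : Finset V) (u : V) : Prop :=
  ∃ s e : ℕ, 1 ≤ s ∧ s ≤ e ∧ e ≤ T ∧ l ≤ e - s + 1 ∧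
    δ * ((e : ℝ) - s + 1) ≤ ∑ t ∈ Finset.Icc s e, (tdeg G S u t : ℝ)

/-- `C` is `(l,δ)`-dense: every vertex of `C` is an `(l,δ)`-dense node in `C`. -/
def denseSet (T : ℕ) (G : ℕ → SimpleGraph V) (l : ℕ) (δ : ℝ) (C : Finset V) : Prop :=
  ∀ u ∈ C, denseNode T G l δ C u

theorem denseNode.mono {T : ℕ} {G : ℕ → SimpleGraph V} {l : ℕ} {δ : ℝ} {S S' : Finset V}
    {u : V} (hS : S ⊆ S') (h : denseNode T G l δ S u) : denseNode T G l δ S' u := by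
  classical
  obtain ⟨s, e, hs, hse, he, hl, hd⟩ := h
  refine ⟨s, e, hs, hse, he, hl, hd.trans (Finset.sum_le_sum fun t _ => ?_)⟩
  exact Nat.cast_le.mpr (Finset.card_le_card (Finset.filter_subset_filter _ hS))

/-- uniqueness of the `(l,δ)`-maximal dense core: there is exactly
one `(l,δ)`-dense set containing every `(l,δ)`-dense subset of `V`. -/
theorem MDC_unique {V : Type*} [Fintype V] [DecidableEq V]
    (T : ℕ) (hT : 1 ≤ T) (G : ℕ → SimpleGraph V)
    (l : ℕ) (hl : 2 ≤ l) (δ : ℝ) (hδ : 0 < δ) :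
    ∃! C : Finset V, denseSet T G l δ C ∧
      ∀ S : Finset V, denseSet T G l δ S → S ⊆ C := by
  classical
  have hsub : ∀ S : Finset V, denseSet T G l δ S →
      S ⊆ (Finset.univ.filter fun S => denseSet T G l δ S).biUnion id := fun S hS =>
    Finset.subset_biUnion_of_mem id (Finset.mem_filter.mpr ⟨Finset.mem_univ S, hS⟩)
  refine ⟨_, ⟨fun u hu => ?_, hsub⟩, fun C hC => (hsub C hC.1).antisymm ?_⟩
  · obtain ⟨S, hS, huS⟩ := Finset.mem_biUnion.mp hu
    have hS' := (Finset.mem_filter.mp hS).2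
    exact (hS' u huS).mono (hsub S hS')
  · exact Finset.biUnion_subset.mpr fun S hS => hC.2 S (Finset.mem_filter.mp hS).2
end
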